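/- The policy-evaluation Bellman operator T^π of the infinite-horizon Bayesian risk MDP with CVaR risk measure under a stationary policy π : S × Δ(Θ) → A, defined on bounded functions V : S × Δ(Θ) → ℝ by (T^π V)(s,μ) = ρ_μ(θ ↦ Σ_ξ f(θ,ξ)·(C(s,π(s,μ),ξ) + γ·V(g(s,π(s,μ),ξ), B(μ,ξ)))), is a γ-contraction in the supremum norm and admits a unique bounded fixed point V^π (the value of the stationary policy π). -/

import Mathlib

open scoped BigOperators

noncomputable section

/-- Membership in the probability simplex `Δ(Θ)`. -/
def InSimplex {Θ : Type*} [Fintype Θ] (μ : Θ → ℝ) : Prop :=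
  (∀ θ, 0 ≤ μ θ) ∧ ∑ θ, μ θ = 1

/-- Bayes update `B(μ,ξ)` of a belief `μ` after observing `ξ`, under the
parametric likelihood `f`; it is `μ` itself when the normalizing constant
is not positive. -/
def bayesUpdate {Θ Ξ : Type*} [Fintype Θ] (f : Θ → Ξ → ℝ)
    (μ : Θ → ℝ) (ξ : Ξ) : Θ → ℝ := by
  classical
  exact if 0 < ∑ θ', μ θ' * f θ' ξ
    then fun θ => μ θ * f θ ξ / ∑ θ', μ θ' * f θ' ξ
    else μ

/-- The CVaR risk functional at level `α` of `Z : Θ → ℝ` under belief `μ`,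
via the Rockafellar–Uryasev formula. -/
def cvarRisk {Θ : Type*} [Fintype Θ] (α : ℝ) (μ : Θ → ℝ) (Z : Θ → ℝ) : ℝ :=
  ⨅ φ : ℝ, φ + (1 - α)⁻¹ * ∑ θ, μ θ * max (Z θ - φ) 0

/-- The policy-evaluation Bellman operator of the infinite-horizon Bayesian
risk MDP with CVaR risk measure under a stationary policy `π`. -/
def brPolicyBellman {S A Θ Ξ : Type*} [Fintype Θ] [Fintype Ξ]
    (f : Θ → Ξ → ℝ) (g : S → A → Ξ → S) (C : S → A → Ξ → ℝ) (γ α : ℝ)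
    (π : S → (Θ → ℝ) → A)
    (V : S → (Θ → ℝ) → ℝ) : S → (Θ → ℝ) → ℝ :=
  fun s μ => cvarRisk α μ (fun θ =>
    ∑ ξ, f θ ξ * (C s (π s μ) ξ + γ * V (g s (π s μ) ξ) (bayesUpdate f μ ξ)))

/-!
For each belief `μ`, the functional `cvarRisk α μ` is monotone and commutes with the addition of
constants, hence is `1`-Lipschitz for the supremum norm, and so is the average against each
likelihood `f θ`. Since Bayes updates keep beliefs in the simplex, the discount factor is the only
constant left, and the Banach fixed point theorem applies to the bounded functions.
-/

section BoundedFixedPoint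

variable {X E : Type*} [NormedAddCommGroup E] [CompleteSpace E] {γ : ℝ}

theorem existsUnique_bounded_fixedPoint (hγ0 : 0 ≤ γ) (hγ1 : γ < 1)
    {T : (X → E) → X → E}
    (hmaps : ∀ u, (∃ M, ∀ x, ‖u x‖ ≤ M) → ∃ M, ∀ x, ‖T u x‖ ≤ M)
    (hcontr : ∀ u v D, (∀ x, ‖u x - v x‖ ≤ D) → ∀ x, ‖T u x - T v x‖ ≤ γ * D) :
    ∃! w, (∃ M, ∀ x, ‖w x‖ ≤ M) ∧ T w = w := by
  let _ : TopologicalSpace X := ⊥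
  have : DiscreteTopology X := ⟨rfl⟩
  have bounded_coe (F : BoundedContinuousFunction X E) : ∃ M, ∀ x, ‖F x‖ ≤ M :=
    ⟨‖F‖, F.norm_coe_le_norm⟩
  choose M hM using fun F : BoundedContinuousFunction X E => hmaps F (bounded_coe F)
  let Φ (F : BoundedContinuousFunction X E) : BoundedContinuousFunction X E :=
    .ofNormedAddCommGroupDiscrete (T F) (M F) (hM F)
  have hΦ : ContractingWith ⟨γ, hγ0⟩ Φ := by
    refine ⟨hγ1, LipschitzWith.of_dist_le_mul fun F G => ?_⟩
    refine (BoundedContinuousFunction.dist_le (mul_nonneg hγ0 dist_nonneg)).2 fun x => ?_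
    rw [dist_eq_norm]
    exact hcontr F G (dist F G)
      (fun y => (dist_eq_norm (F y) (G y)).symm.trans_le (F.dist_coe_le_dist y)) x
  refine ⟨hΦ.fixedPoint, ⟨bounded_coe _, congrArg (⇑) hΦ.fixedPoint_isFixedPt⟩, ?_⟩
  rintro w ⟨⟨K, hK⟩, hw⟩
  let W : BoundedContinuousFunction X E := .ofNormedAddCommGroupDiscrete w K hK
  exact congrArg (⇑) (hΦ.fixedPoint_unique (x := W) (DFunLike.coe_injective hw))

theorem existsUnique_bounded_fixedPoint_on (hγ0 : 0 ≤ γ) (hγ1 : γ < 1) (P : Set X)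
    {T : (X → E) → X → E}
    (hmaps : ∀ u, (∃ M, ∀ x ∈ P, ‖u x‖ ≤ M) → ∃ M, ∀ x ∈ P, ‖T u x‖ ≤ M)
    (hcontr : ∀ u v D, (∀ x ∈ P, ‖u x - v x‖ ≤ D) → ∀ x ∈ P, ‖T u x - T v x‖ ≤ γ * D) :
    ∃ w, (∃ M, ∀ x ∈ P, ‖w x‖ ≤ M) ∧ Set.EqOn (T w) w P ∧
      ∀ u, (∃ M, ∀ x ∈ P, ‖u x‖ ≤ M) → Set.EqOn (T u) u P → Set.EqOn u w P := by
  have bounded_indicator {u : X → E} : (∃ M, ∀ x ∈ P, ‖u x‖ ≤ M) →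
      ∃ M, ∀ x, ‖P.indicator u x‖ ≤ M := by
    rintro ⟨M, hM⟩
    refine ⟨max M 0, fun x => ?_⟩
    by_cases hx : x ∈ P <;> simp [hx, hM]
  -- Cutting off outside `P` gives an operator to which the global statement applies.
  obtain ⟨w, ⟨⟨M, hM⟩, hw⟩, hunique⟩ :=
    existsUnique_bounded_fixedPoint (T := fun u => P.indicator (T u)) hγ0 hγ1
      (fun u ⟨M, hM⟩ => bounded_indicator (hmaps u ⟨M, fun x _ => hM x⟩))
      (fun u v D huv x => by
        have hD : 0 ≤ D := (norm_nonneg _).trans (huv x)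
        by_cases hx : x ∈ P
        · simpa [hx] using hcontr u v D (fun y _ => huv y) x hx
        · simpa [hx] using mul_nonneg hγ0 hD)
  refine ⟨w, ⟨M, fun x _ => hM x⟩, fun x hx => ?_, fun u hu hTu x hx => ?_⟩
  · simpa [hx] using congrFun hw x
  · have hT_indicator : Set.EqOn (T (P.indicator u)) (T u) P := fun y hy => by
      have := hcontr (P.indicator u) u 0 (fun z hz => by simp [hz]) y hy
      rwa [mul_zero, norm_le_zero_iff, sub_eq_zero] at this
    have hfixed : P.indicator (T (P.indicator u)) = P.indicator u :=
      Set.indicator_congr (hT_indicator.trans hTu)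
    simpa [hx] using congrFun (hunique _ ⟨bounded_indicator hu, hfixed⟩) x

end BoundedFixedPoint

theorem le_ciSup_ciSup {ι κ α : Type*} [ConditionallyCompleteLattice α] {u : ι → κ → α} {M : α}
    (hu : ∀ i j, u i j ≤ M) (i : ι) (j : κ) : u i j ≤ ⨆ i, ⨆ j, u i j := by
  have hbdd : BddAbove (Set.range fun p : ι × κ => u p.1 p.2) :=
    ⟨M, Set.forall_mem_range.2 fun p => hu p.1 p.2⟩
  exact (le_ciSup hbdd (i, j)).trans_eq (ciSup_prod hbdd)

section Simplex

variable {Θ Ξ : Type*} [Fintype Θ] {μ Z Z' : Θ → ℝ} {D : ℝ}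

theorem nonempty_inSimplex [Nonempty Θ] : Nonempty {μ : Θ → ℝ // InSimplex μ} := by
  classical
  exact ⟨⟨_, single_mem_stdSimplex ℝ (Classical.arbitrary Θ)⟩⟩

namespace InSimplex

theorem sum_mul_const (hμ : InSimplex μ) (c : ℝ) : ∑ θ, μ θ * c = c := by
  rw [← Finset.sum_mul, hμ.2, one_mul]

theorem abs_sum_mul_le (hμ : InSimplex μ) (hZ : ∀ θ, |Z θ| ≤ D) : |∑ θ, μ θ * Z θ| ≤ D :=
  calc |∑ θ, μ θ * Z θ| ≤ ∑ θ, |μ θ * Z θ| := Finset.abs_sum_le_sum_abs _ _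
    _ ≤ ∑ θ, μ θ * D := Finset.sum_le_sum fun θ _ => by
        rw [abs_mul, abs_of_nonneg (hμ.1 θ)]
        exact mul_le_mul_of_nonneg_left (hZ θ) (hμ.1 θ)
    _ = D := hμ.sum_mul_const D

theorem abs_sum_mul_sub_sum_mul_le (hμ : InSimplex μ) (hZ : ∀ θ, |Z θ - Z' θ| ≤ D) :
    |∑ θ, μ θ * Z θ - ∑ θ, μ θ * Z' θ| ≤ D := by
  simpa only [mul_sub, Finset.sum_sub_distrib] using hμ.abs_sum_mul_le hZ

end InSimplex

theorem inSimplex_bayesUpdate (hμ : InSimplex μ) {f : Θ → Ξ → ℝ} {ξ : Ξ} (hf : ∀ θ, 0 ≤ f θ ξ) :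
    InSimplex (bayesUpdate f μ ξ) := by
  unfold bayesUpdate
  split_ifs with hpos
  · refine ⟨fun θ => div_nonneg (mul_nonneg (hμ.1 θ) (hf θ)) hpos.le, ?_⟩
    rw [← Finset.sum_div, div_self hpos.ne']
  · exact hμ

end Simplex

section CVaR

variable {Θ : Type*} [Fintype Θ] {α : ℝ} {μ Z Z' : Θ → ℝ}

/-- The Rockafellar–Uryasev objective, whose infimum over the threshold `φ` is `cvarRisk α μ Z`. -/
def cvarObjective (α : ℝ) (μ Z : Θ → ℝ) (φ : ℝ) : ℝ :=
  φ + (1 - α)⁻¹ * ∑ θ, μ θ * max (Z θ - φ) 0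

theorem sum_mul_le_cvarObjective (hα0 : 0 ≤ α) (hα1 : α < 1) (hμ : InSimplex μ) (Z : Θ → ℝ)
    (φ : ℝ) : ∑ θ, μ θ * Z θ ≤ cvarObjective α μ Z φ := by
  have one_le_inv : 1 ≤ (1 - α)⁻¹ := (one_le_inv₀ (by linarith)).2 (by linarith)
  have excess_nonneg : 0 ≤ ∑ θ, μ θ * max (Z θ - φ) 0 :=
    Finset.sum_nonneg fun θ _ => mul_nonneg (hμ.1 θ) (le_max_right _ _)
  calc ∑ θ, μ θ * Z θ = φ + ∑ θ, μ θ * (Z θ - φ) := by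
        simp only [mul_sub, Finset.sum_sub_distrib, hμ.sum_mul_const, add_sub_cancel]
    _ ≤ φ + ∑ θ, μ θ * max (Z θ - φ) 0 := by
        gcongr with θ
        · exact hμ.1 θ
        · exact le_max_left _ _
    _ ≤ cvarObjective α μ Z φ :=
        add_le_add_right (le_mul_of_one_le_left excess_nonneg one_le_inv) φ

theorem bddBelow_range_cvarObjective (hα0 : 0 ≤ α) (hα1 : α < 1) (hμ : InSimplex μ) (Z : Θ → ℝ) :
    BddBelow (Set.range (cvarObjective α μ Z)) :=
  ⟨∑ θ, μ θ * Z θ, Set.forall_mem_range.2 (sum_mul_le_cvarObjective hα0 hα1 hμ Z)⟩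

theorem cvarRisk_mono (hα0 : 0 ≤ α) (hα1 : α < 1) (hμ : InSimplex μ) :
    Monotone (cvarRisk α μ) := by
  intro Z Z' hZ
  refine ciInf_mono (bddBelow_range_cvarObjective hα0 hα1 hμ Z) fun φ => ?_
  have : 0 ≤ (1 - α)⁻¹ := inv_nonneg.2 (sub_nonneg.2 hα1.le)
  gcongr with θ
  · exact hμ.1 θ
  · exact hZ θ

theorem cvarRisk_add_const (hα0 : 0 ≤ α) (hα1 : α < 1) (hμ : InSimplex μ) (Z : Θ → ℝ) (c : ℝ) :
    cvarRisk α μ (fun θ => Z θ + c) = cvarRisk α μ Z + c := by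
  have shift (φ : ℝ) :
      cvarObjective α μ (fun θ => Z θ + c) (φ + c) = cvarObjective α μ Z φ + c := by
    simp only [cvarObjective, add_sub_add_right_eq_sub, add_right_comm]
  calc cvarRisk α μ (fun θ => Z θ + c)
      = ⨅ φ, cvarObjective α μ (fun θ => Z θ + c) (φ + c) :=
        ((Equiv.addRight c).iInf_comp (g := cvarObjective α μ fun θ => Z θ + c)).symm
    _ = ⨅ φ, (cvarObjective α μ Z φ + c) := iInf_congr shift
    _ = cvarRisk α μ Z + c :=
        ((OrderIso.addRight c).map_ciInf (bddBelow_range_cvarObjective hα0 hα1 hμ Z)).symm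

theorem cvarRisk_zero (hα0 : 0 ≤ α) (hα1 : α < 1) (hμ : InSimplex μ) :
    cvarRisk α μ (fun _ => 0) = 0 := by
  apply le_antisymm
  · exact (ciInf_le (bddBelow_range_cvarObjective hα0 hα1 hμ fun _ => 0) 0).trans_eq
      (by simp [cvarObjective])
  · exact le_ciInf fun φ => (hμ.sum_mul_const 0).symm.trans_le
      (sum_mul_le_cvarObjective hα0 hα1 hμ (fun _ => 0) φ)

theorem abs_cvarRisk_sub_cvarRisk_le (hα0 : 0 ≤ α) (hα1 : α < 1) (hμ : InSimplex μ) {D : ℝ}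
    (hZ : ∀ θ, |Z θ - Z' θ| ≤ D) : |cvarRisk α μ Z - cvarRisk α μ Z'| ≤ D := by
  have le_add {Y Y' : Θ → ℝ} (hY : ∀ θ, Y θ ≤ Y' θ + D) :
      cvarRisk α μ Y ≤ cvarRisk α μ Y' + D :=
    (cvarRisk_mono hα0 hα1 hμ hY).trans_eq (cvarRisk_add_const hα0 hα1 hμ Y' D)
  simp only [abs_sub_le_iff, sub_le_iff_le_add'] at hZ ⊢
  exact ⟨le_add fun θ => (hZ θ).1, le_add fun θ => (hZ θ).2⟩

theorem abs_cvarRisk_le (hα0 : 0 ≤ α) (hα1 : α < 1) (hμ : InSimplex μ) {D : ℝ}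
    (hZ : ∀ θ, |Z θ| ≤ D) : |cvarRisk α μ Z| ≤ D := by
  simpa only [cvarRisk_zero hα0 hα1 hμ, sub_zero] using
    abs_cvarRisk_sub_cvarRisk_le (Z' := fun _ => 0) hα0 hα1 hμ (by simpa only [sub_zero] using hZ)

end CVaR

section Bellman

variable {S A Θ Ξ : Type*} [Fintype Θ] [Fintype Ξ] {f : Θ → Ξ → ℝ} {g : S → A → Ξ → S}
  {C : S → A → Ξ → ℝ} {γ α : ℝ} {π : S → (Θ → ℝ) → A} {V V' : S → (Θ → ℝ) → ℝ}

theorem abs_brPolicyBellman_sub_le (hf : ∀ θ, InSimplex (f θ)) (hγ0 : 0 ≤ γ) (hα0 : 0 ≤ α)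
    (hα1 : α < 1) {D : ℝ} (hV : ∀ s μ, InSimplex μ → |V s μ - V' s μ| ≤ D) (s : S) {μ : Θ → ℝ}
    (hμ : InSimplex μ) :
    |brPolicyBellman f g C γ α π V s μ - brPolicyBellman f g C γ α π V' s μ| ≤ γ * D := by
  refine abs_cvarRisk_sub_cvarRisk_le hα0 hα1 hμ fun θ => ?_
  refine (hf θ).abs_sum_mul_sub_sum_mul_le fun ξ => ?_
  rw [add_sub_add_left_eq_sub, ← mul_sub, abs_mul, abs_of_nonneg hγ0]
  gcongr
  exact hV _ _ (inSimplex_bayesUpdate hμ fun θ => (hf θ).1 ξ)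

theorem abs_brPolicyBellman_le (hf : ∀ θ, InSimplex (f θ)) (hγ0 : 0 ≤ γ) (hα0 : 0 ≤ α)
    (hα1 : α < 1) {K M : ℝ} (hC : ∀ s a ξ, |C s a ξ| ≤ K)
    (hV : ∀ s μ, InSimplex μ → |V s μ| ≤ M) (s : S) {μ : Θ → ℝ} (hμ : InSimplex μ) :
    |brPolicyBellman f g C γ α π V s μ| ≤ K + γ * M := by
  refine abs_cvarRisk_le hα0 hα1 hμ fun θ => (hf θ).abs_sum_mul_le fun ξ => ?_
  refine (abs_add_le _ _).trans (add_le_add (hC _ _ _) ?_)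
  rw [abs_mul, abs_of_nonneg hγ0]
  gcongr
  exact hV _ _ (inSimplex_bayesUpdate hμ fun θ => (hf θ).1 ξ)

theorem iSup_abs_brPolicyBellman_sub_le [Nonempty S] [Nonempty Θ] (hf : ∀ θ, InSimplex (f θ))
    (hγ0 : 0 ≤ γ) (hα0 : 0 ≤ α) (hα1 : α < 1) (hV : ∃ M, ∀ s μ, InSimplex μ → |V s μ| ≤ M)
    (hV' : ∃ M, ∀ s μ, InSimplex μ → |V' s μ| ≤ M) :
    (⨆ s, ⨆ μ : {μ : Θ → ℝ // InSimplex μ},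
        |brPolicyBellman f g C γ α π V s μ.1 - brPolicyBellman f g C γ α π V' s μ.1|) ≤
      γ * ⨆ s, ⨆ μ : {μ : Θ → ℝ // InSimplex μ}, |V s μ.1 - V' s μ.1| := by
  obtain ⟨M, hM⟩ := hV
  obtain ⟨M', hM'⟩ := hV'
  have abs_sub_le_add (s : S) (μ : {μ : Θ → ℝ // InSimplex μ}) :
      |V s μ.1 - V' s μ.1| ≤ M + M' :=
    (abs_sub _ _).trans (add_le_add (hM s μ.1 μ.2) (hM' s μ.1 μ.2))
  have := nonempty_inSimplex (Θ := Θ)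
  exact ciSup_le fun s => ciSup_le fun μ => abs_brPolicyBellman_sub_le hf hγ0 hα0 hα1
    (fun s μ hμ => le_ciSup_ciSup abs_sub_le_add s ⟨μ, hμ⟩) s μ.2

theorem existsUnique_bounded_fixedPoint_brPolicyBellman (hf : ∀ θ, InSimplex (f θ)) (hγ0 : 0 ≤ γ)
    (hγ1 : γ < 1) (hα0 : 0 ≤ α) (hα1 : α < 1) (hC : ∃ K, ∀ s a ξ, |C s a ξ| ≤ K) :
    ∃ Vpi : S → (Θ → ℝ) → ℝ,
      (∃ M, ∀ s μ, InSimplex μ → |Vpi s μ| ≤ M) ∧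
      (∀ s μ, InSimplex μ → brPolicyBellman f g C γ α π Vpi s μ = Vpi s μ) ∧
      (∀ V : S → (Θ → ℝ) → ℝ,
        (∃ M, ∀ s μ, InSimplex μ → |V s μ| ≤ M) →
        (∀ s μ, InSimplex μ → brPolicyBellman f g C γ α π V s μ = V s μ) →
        ∀ s μ, InSimplex μ → V s μ = Vpi s μ) := by
  obtain ⟨K, hK⟩ := hC
  let T (u : S × (Θ → ℝ) → ℝ) : S × (Θ → ℝ) → ℝ :=
    Function.uncurry (brPolicyBellman f g C γ α π (Function.curry u))
  obtain ⟨w, ⟨M, hM⟩, hw, hunique⟩ :=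
    existsUnique_bounded_fixedPoint_on (T := T) hγ0 hγ1 {x | InSimplex x.2}
      (fun u ⟨M, hM⟩ => ⟨K + γ * M, fun x hx =>
        abs_brPolicyBellman_le hf hγ0 hα0 hα1 hK (fun s μ hμ => hM (s, μ) hμ) x.1 hx⟩)
      (fun u v D huv x hx =>
        abs_brPolicyBellman_sub_le hf hγ0 hα0 hα1 (fun s μ hμ => huv (s, μ) hμ) x.1 hx)
  refine ⟨Function.curry w, ⟨M, fun s μ hμ => hM (s, μ) hμ⟩, fun s μ hμ => hw (x := (s, μ)) hμ, ?_⟩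
  rintro V ⟨M', hM'⟩ hV s μ hμ
  exact hunique (Function.uncurry V) ⟨M', fun x hx => hM' x.1 x.2 hx⟩
    (fun x hx => hV x.1 x.2 hx) (x := (s, μ)) hμ

end Bellman

theorem brPolicyBellman_contraction_unique_fixed_point_general
    {S A Θ Ξ : Type*} [Nonempty S] [Fintype Θ] [Nonempty Θ] [Fintype Ξ]
    (f : Θ → Ξ → ℝ) (hf0 : ∀ θ ξ, 0 ≤ f θ ξ) (hf1 : ∀ θ, ∑ ξ, f θ ξ = 1)
    (g : S → A → Ξ → S) (C : S → A → Ξ → ℝ) (hC : ∃ K, ∀ s a ξ, |C s a ξ| ≤ K)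
    (γ : ℝ) (hγ0 : 0 ≤ γ) (hγ1 : γ < 1)
    (α : ℝ) (hα0 : 0 ≤ α) (hα1 : α < 1)
    (π : S → (Θ → ℝ) → A) :
    (∀ V V' : S → (Θ → ℝ) → ℝ,
        (∃ M, ∀ s μ, InSimplex μ → |V s μ| ≤ M) →
        (∃ M, ∀ s μ, InSimplex μ → |V' s μ| ≤ M) →
        (⨆ s, ⨆ μ : {μ : Θ → ℝ // InSimplex μ},
            |brPolicyBellman f g C γ α π V s μ.1 -
              brPolicyBellman f g C γ α π V' s μ.1|) ≤
          γ * ⨆ s, ⨆ μ : {μ : Θ → ℝ // InSimplex μ}, |V s μ.1 - V' s μ.1|) ∧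
    (∃ Vpi : S → (Θ → ℝ) → ℝ,
        (∃ M, ∀ s μ, InSimplex μ → |Vpi s μ| ≤ M) ∧
        (∀ s μ, InSimplex μ → brPolicyBellman f g C γ α π Vpi s μ = Vpi s μ) ∧
        (∀ V : S → (Θ → ℝ) → ℝ,
          (∃ M, ∀ s μ, InSimplex μ → |V s μ| ≤ M) →
          (∀ s μ, InSimplex μ → brPolicyBellman f g C γ α π V s μ = V s μ) →
          ∀ s μ, InSimplex μ → V s μ = Vpi s μ)) := by
  have hf (θ : Θ) : InSimplex (f θ) := ⟨hf0 θ, hf1 θ⟩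
  exact ⟨fun _ _ => iSup_abs_brPolicyBellman_sub_le hf hγ0 hα0 hα1,
    existsUnique_bounded_fixedPoint_brPolicyBellman hf hγ0 hγ1 hα0 hα1 hC⟩

/-- The policy-evaluation Bellman operator `T^π` of the
infinite-horizon Bayesian risk MDP with CVaR risk measure under a stationary
policy `π` is a `γ`-contraction in the supremum norm over `S × Δ(Θ)` and admits
a unique bounded fixed point `V^π` (the value of the stationary policy `π`). -/
theorem brPolicyBellman_contraction_unique_fixed_point
    {S A Θ Ξ : Type*} [Fintype S] [Nonempty S] [Fintype A] [Nonempty A]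
    [Fintype Θ] [Nonempty Θ] [Fintype Ξ] [Nonempty Ξ]
    (f : Θ → Ξ → ℝ) (hf0 : ∀ θ ξ, 0 ≤ f θ ξ) (hf1 : ∀ θ, ∑ ξ, f θ ξ = 1)
    (g : S → A → Ξ → S) (C : S → A → Ξ → ℝ)
    (γ : ℝ) (hγ0 : 0 ≤ γ) (hγ1 : γ < 1)
    (α : ℝ) (hα0 : 0 ≤ α) (hα1 : α < 1)
    (π : S → (Θ → ℝ) → A) :
    (∀ V V' : S → (Θ → ℝ) → ℝ,
        (∃ M, ∀ s μ, InSimplex μ → |V s μ| ≤ M) →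
        (∃ M, ∀ s μ, InSimplex μ → |V' s μ| ≤ M) →
        (⨆ s, ⨆ μ : {μ : Θ → ℝ // InSimplex μ},
            |brPolicyBellman f g C γ α π V s μ.1 -
              brPolicyBellman f g C γ α π V' s μ.1|) ≤
          γ * ⨆ s, ⨆ μ : {μ : Θ → ℝ // InSimplex μ}, |V s μ.1 - V' s μ.1|) ∧
    (∃ Vpi : S → (Θ → ℝ) → ℝ,
        (∃ M, ∀ s μ, InSimplex μ → |Vpi s μ| ≤ M) ∧
        (∀ s μ, InSimplex μ → brPolicyBellman f g C γ α π Vpi s μ = Vpi s μ) ∧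
        (∀ V : S → (Θ → ℝ) → ℝ,
          (∃ M, ∀ s μ, InSimplex μ → |V s μ| ≤ M) →
          (∀ s μ, InSimplex μ → brPolicyBellman f g C γ α π V s μ = V s μ) →
          ∀ s μ, InSimplex μ → V s μ = Vpi s μ)) := by
  obtain ⟨K, hK⟩ := Finite.exists_le fun x : S × A × Ξ => |C x.1 x.2.1 x.2.2|
  exact brPolicyBellman_contraction_unique_fixed_point_general f hf0 hf1 g C
    ⟨K, fun s a ξ => hK (s, a, ξ)⟩ γ hγ0 hγ1 α hα0 hα1 π

end
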